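/- (Controlled Markov property of R¹_t.) Fix arbitrary deterministic encoding rules f²_{1:T} for encoder 2, memory update rules l¹_{1:T}, l²_{1:T}, decoding rules g_{1:T}, and an arbitrary deterministic encoding strategy for encoder 1. Define R¹_t := (X¹_t, b¹_t, μ¹_t). Then for every t and every realization (r_{1:t}, z_{1:t}) of (R¹_{1:t}, Z¹_{1:t}) of positive probability and every value r of R¹_{t+1}: P(R¹_{t+1} = r | R¹_{1:t} = r_{1:t}, Z¹_{1:t} = z_{1:t}) = P(R¹_{t+1} = r | R¹_t = r_t, Z¹_t = z_t); i.e., the conditional distribution of R¹_{t+1} given the past depends only on (r_t, z_t). -/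

import Mathlib

/-!
On every trajectory of positive probability, `R¹_{t+1}` is a fixed function `stepR` of
`(R¹_t, Z¹_t, X¹_{t+1})`:

* `b¹_{t+1}` is obtained from `b¹_t` by Bayes' rule, with likelihood `K¹_t(a, X¹_t, X¹_{t+1})`
  (`belA_succ`);
* `M¹_{t-1}` is a function of `Z¹_{0:t-1}` and of the noise, and the noise is independent of the
  source. Hence `μ¹_t` is the law of the memory driven by the frozen input `Z¹_{0:t-1}`, and
  `μ¹_{t+1}` is the image of `μ¹_t` under one fresh channel use with input `Z¹_t` (`belM_succ`).

By the tower property (`sum_tower`), given `X¹_{0:t}` the next observation is distributed as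
`∑ a, b¹_t(a) K¹_t(a, X¹_t, ·)`, which depends on `R¹_t` only. So if an event `F` is determined by
`X¹_{0:t}` and forces `R¹_t = ρ` and `Z¹_t = z`, then `P({R¹_{t+1} = r} ∩ F) = c · P(F)`, where `c`
depends on `ρ`, `z` and `r` only (`Pr_next_inter`). The theorem compares two such events `F`.

The source given `A = a` and the channel noise are both treated as processes with one-step kernels
that may depend on the whole past (`pathW`); the marginalization identity they share is
`sum_pathW_step`.
-/

open Finset

namespace MTC

noncomputable section

/-- Probability of an event `E` under the weight function `p` on a finite sample space. -/
def Pr {Ω : Type*} [Fintype Ω] (p : Ω → ℝ) (E : Set Ω) : ℝ :=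
  ∑ ω, E.indicator p ω

/-- Conditional probability `P(E ∣ F)`. -/
def cPr {Ω : Type*} [Fintype Ω] (p : Ω → ℝ) (E F : Set Ω) : ℝ :=
  Pr p (E ∩ F) / Pr p F

/-- Conditional expectation `E[φ ∣ F]`. -/
def cExp {Ω : Type*} [Fintype Ω] (p : Ω → ℝ) (φ : Ω → ℝ) (F : Set Ω) : ℝ :=
  (∑ ω, F.indicator (fun ω' => p ω' * φ ω') ω) / Pr p F

/-- Extension of a trajectory `x : Fin T → X` to all of `ℕ` (junk after time `T-1`). -/
def pad {X : Type*} [Inhabited X] {T : ℕ} (x : Fin T → X) (n : ℕ) : X :=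
  if h : n < T then x ⟨n, h⟩ else default

/-- A deterministic encoding strategy: at each (0-indexed) time `t` the transmitted symbol
is an arbitrary function of the observation history `X_{0:t}` and the past transmitted
symbols `Z_{0:t-1}`. -/
abbrev Strat (X Z : Type*) := (t : ℕ) → (Fin (t + 1) → X) → (Fin t → Z) → Z

/-- The transmitted-symbol process generated by strategy `f` on observation path `x`. -/
def Zseq {X Z : Type*} (f : Strat X Z) (x : ℕ → X) : ℕ → Z
  | t => f t (fun i => x i.val) (fun i => Zseq f x i.val)
  termination_by t => t
  decreasing_by exact i.isLt

/-- The receiver-memory process: `Mseq l y t` is the memory content `M_{t-1}` of the paper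
(after the symbols `y_0, …, y_{t-1}` have been processed), with the convention
`M_0 := default` (the paper's `M_0 := 0`). -/
def Mseq {Y M : Type*} [Inhabited M] (l : ℕ → M → Y → M) (y : ℕ → Y) : ℕ → M
  | 0 => default
  | t + 1 => l t (Mseq l y t) (y t)

/-- Weight of a trajectory of a (time-inhomogeneous) Markov chain with initial law
`init a` and transition kernels `K t a`, for a given value `a` of the coupling
random variable. -/
def chainW {A X : Type*} [Inhabited X] (T : ℕ) (init : A → X → ℝ)
    (K : ℕ → A → X → X → ℝ) (a : A) (x : Fin T → X) : ℝ :=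
  if T = 0 then 1
  else init a (pad x 0) * ∏ t ∈ Finset.range (T - 1), K t a (pad x t) (pad x (t + 1))

/-- Canonical sample space: the coupling variable `A`, the two source trajectories and
the two channel-noise trajectories. -/
abbrev Samp (A X1 X2 N1 N2 : Type*) (T : ℕ) :=
  A × (Fin T → X1) × (Fin T → X2) × (Fin T → N1) × (Fin T → N2)

variable {A X1 X2 Z1 Z2 N1 N2 Y1 Y2 M1 M2 : Type*}

/-- The joint law of `(A, X¹_{1:T}, X²_{1:T}, N¹_{1:T}, N²_{1:T})`:
`P(X¹_1, X²_1, A) = P(X¹_1|A) P(X²_1|A) P(A)`, conditioned on `A` the two source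
components are independent Markov chains with kernels `K1, K2`, and the channel noises
are mutually independent and independent of the source. -/
def jointP [Inhabited X1] [Inhabited X2] (T : ℕ)
    (pA : A → ℝ) (init1 : A → X1 → ℝ) (K1 : ℕ → A → X1 → X1 → ℝ)
    (init2 : A → X2 → ℝ) (K2 : ℕ → A → X2 → X2 → ℝ)
    (q1 : ℕ → N1 → ℝ) (q2 : ℕ → N2 → ℝ) : Samp A X1 X2 N1 N2 T → ℝ :=
  fun ω =>
    pA ω.1 * chainW T init1 K1 ω.1 ω.2.1 * chainW T init2 K2 ω.1 ω.2.2.1 *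
      (∏ t : Fin T, q1 t.val (ω.2.2.2.1 t)) * (∏ t : Fin T, q2 t.val (ω.2.2.2.2 t))

variable (T : ℕ)

/-- Encoder 1's transmitted symbol `Z¹_t` (a deterministic function of `X¹_{0:t}`). -/
def Z1f [Inhabited X1] (f1 : Strat X1 Z1) (ω : Samp A X1 X2 N1 N2 T) : ℕ → Z1 :=
  Zseq f1 (pad ω.2.1)

/-- Encoder 2's transmitted symbol `Z²_t`. -/
def Z2f [Inhabited X2] (f2 : Strat X2 Z2) (ω : Samp A X1 X2 N1 N2 T) : ℕ → Z2 :=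
  Zseq f2 (pad ω.2.2.1)

/-- Channel-1 output `Y¹_t = h¹_t(Z¹_t, N¹_t)`. -/
def Y1f [Inhabited X1] [Inhabited N1] (h1 : ℕ → Z1 → N1 → Y1) (f1 : Strat X1 Z1)
    (ω : Samp A X1 X2 N1 N2 T) : ℕ → Y1 :=
  fun t => h1 t (Z1f T f1 ω t) (pad ω.2.2.2.1 t)

/-- Channel-2 output `Y²_t = h²_t(Z²_t, N²_t)`. -/
def Y2f [Inhabited X2] [Inhabited N2] (h2 : ℕ → Z2 → N2 → Y2) (f2 : Strat X2 Z2)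
    (ω : Samp A X1 X2 N1 N2 T) : ℕ → Y2 :=
  fun t => h2 t (Z2f T f2 ω t) (pad ω.2.2.2.2 t)

/-- Receiver memory `M¹_{t-1}` for channel 1. -/
def M1f [Inhabited X1] [Inhabited N1] [Inhabited M1] (h1 : ℕ → Z1 → N1 → Y1)
    (f1 : Strat X1 Z1) (l1 : ℕ → M1 → Y1 → M1) (ω : Samp A X1 X2 N1 N2 T) : ℕ → M1 :=
  Mseq l1 (Y1f T h1 f1 ω)

/-- Receiver memory `M²_{t-1}` for channel 2. -/
def M2f [Inhabited X2] [Inhabited N2] [Inhabited M2] (h2 : ℕ → Z2 → N2 → Y2)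
    (f2 : Strat X2 Z2) (l2 : ℕ → M2 → Y2 → M2) (ω : Samp A X1 X2 N1 N2 T) : ℕ → M2 :=
  Mseq l2 (Y2f T h2 f2 ω)

/-- The receiver's estimate `X̂_t = g_t(Y¹_t, Y²_t, M¹_{t-1}, M²_{t-1})`. -/
def estf [Inhabited X1] [Inhabited X2] [Inhabited N1] [Inhabited N2]
    [Inhabited M1] [Inhabited M2]
    (h1 : ℕ → Z1 → N1 → Y1) (h2 : ℕ → Z2 → N2 → Y2)
    (f1 : Strat X1 Z1) (f2 : Strat X2 Z2)
    (l1 : ℕ → M1 → Y1 → M1) (l2 : ℕ → M2 → Y2 → M2)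
    (g : ℕ → Y1 → Y2 → M1 → M2 → X1 × X2 × A) (ω : Samp A X1 X2 N1 N2 T) :
    ℕ → X1 × X2 × A :=
  fun t => g t (Y1f T h1 f1 ω t) (Y2f T h2 f2 ω t) (M1f T h1 f1 l1 ω t) (M2f T h2 f2 l2 ω t)

/-- The state `X_t = (X¹_t, X²_t, A)` of the source. -/
def Xst [Inhabited X1] [Inhabited X2] (ω : Samp A X1 X2 N1 N2 T) (t : ℕ) : X1 × X2 × A :=
  (pad ω.2.1 t, pad ω.2.2.1 t, ω.1)

/-- Expected total distortion `J = E[∑_{t=1}^T ρ_t(X_t, X̂_t)]`. -/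
def J [Fintype A] [Fintype X1] [Fintype X2] [Fintype N1] [Fintype N2]
    [Inhabited X1] [Inhabited X2] [Inhabited N1] [Inhabited N2]
    [Inhabited M1] [Inhabited M2]
    (p : Samp A X1 X2 N1 N2 T → ℝ)
    (h1 : ℕ → Z1 → N1 → Y1) (h2 : ℕ → Z2 → N2 → Y2)
    (ρ : ℕ → X1 × X2 × A → X1 × X2 × A → ℝ)
    (f1 : Strat X1 Z1) (f2 : Strat X2 Z2)
    (g : ℕ → Y1 → Y2 → M1 → M2 → X1 × X2 × A)
    (l1 : ℕ → M1 → Y1 → M1) (l2 : ℕ → M2 → Y2 → M2) : ℝ :=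
  ∑ ω, p ω * ∑ t ∈ Finset.range T, ρ t (Xst T ω t) (estf T h1 h2 f1 f2 l1 l2 g ω t)

/-- Encoder 1's belief on `A`: `b¹_t(a) = P(A = a ∣ X¹_{0:t} = xs_{0:t})`. -/
def belA [Fintype A] [Fintype X1] [Fintype X2] [Fintype N1] [Fintype N2]
    [Inhabited X1]
    (p : Samp A X1 X2 N1 N2 T → ℝ) (t : ℕ) (xs : ℕ → X1) : A → ℝ :=
  fun a => cPr p {ω : Samp A X1 X2 N1 N2 T | ω.1 = a} {ω | ∀ s ≤ t, pad ω.2.1 s = xs s}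

/-- Encoder 1's belief on the receiver memory:
`μ¹_t(m) = P(M¹_{t-1} = m ∣ Z¹_{0:t-1} = zs_{0:t-1})`. -/
def belM [Fintype A] [Fintype X1] [Fintype X2] [Fintype N1] [Fintype N2]
    [Inhabited X1] [Inhabited N1] [Inhabited M1]
    (p : Samp A X1 X2 N1 N2 T → ℝ) (h1 : ℕ → Z1 → N1 → Y1)
    (f1 : Strat X1 Z1) (l1 : ℕ → M1 → Y1 → M1) (t : ℕ) (zs : ℕ → Z1) : M1 → ℝ :=
  fun m =>
    cPr p {ω : Samp A X1 X2 N1 N2 T | M1f T h1 f1 l1 ω t = m}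
      {ω | ∀ s < t, Z1f T f1 ω s = zs s}

/-- Encoder 2's belief on `A`. -/
def belA2 [Fintype A] [Fintype X1] [Fintype X2] [Fintype N1] [Fintype N2]
    [Inhabited X2]
    (p : Samp A X1 X2 N1 N2 T → ℝ) (t : ℕ) (xs : ℕ → X2) : A → ℝ :=
  fun a => cPr p {ω : Samp A X1 X2 N1 N2 T | ω.1 = a} {ω | ∀ s ≤ t, pad ω.2.2.1 s = xs s}

/-- Encoder 2's belief on the receiver memory. -/
def belM2 [Fintype A] [Fintype X1] [Fintype X2] [Fintype N1] [Fintype N2]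
    [Inhabited X2] [Inhabited N2] [Inhabited M2]
    (p : Samp A X1 X2 N1 N2 T → ℝ) (h2 : ℕ → Z2 → N2 → Y2)
    (f2 : Strat X2 Z2) (l2 : ℕ → M2 → Y2 → M2) (t : ℕ) (zs : ℕ → Z2) : M2 → ℝ :=
  fun m =>
    cPr p {ω : Samp A X1 X2 N1 N2 T | M2f T h2 f2 l2 ω t = m}
      {ω | ∀ s < t, Z2f T f2 ω s = zs s}

end

/-- Encoder 1's state `R¹_t = (X¹_t, b¹_t, μ¹_t)`, where `b¹_t` and `μ¹_t` are the
beliefs computed from the realized histories `X¹_{0:t}` and `Z¹_{0:t-1}`. -/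
noncomputable def R1f {A X1 X2 Z1 N1 N2 Y1 M1 : Type*}
    [Fintype A] [Fintype X1] [Fintype X2] [Fintype N1] [Fintype N2]
    [Inhabited X1] [Inhabited N1] [Inhabited M1]
    (T : ℕ) (p : Samp A X1 X2 N1 N2 T → ℝ) (h1 : ℕ → Z1 → N1 → Y1)
    (f1 : Strat X1 Z1) (l1 : ℕ → M1 → Y1 → M1)
    (ω : Samp A X1 X2 N1 N2 T) (t : ℕ) : X1 × (A → ℝ) × (M1 → ℝ) :=
  (pad ω.2.1 t, belA T p t (pad ω.2.1), belM T p h1 f1 l1 t (Z1f T f1 ω))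

set_option linter.unusedSectionVars false

/-- The expectation form of `Pr`: it turns intersections of events into products. -/
lemma Pr_eq_sum_ite {Ω : Type*} [Fintype Ω] (p : Ω → ℝ) (C : Ω → Prop)
    [∀ ω, Decidable (C ω)] :
    Pr p {ω | C ω} = ∑ ω, p ω * (if C ω then 1 else 0) := by
  unfold Pr
  refine Finset.sum_congr rfl fun ω _ => ?_
  by_cases h : C ω <;> simp [Set.indicator, h]

lemma Pr_mono {Ω : Type*} [Fintype Ω] {p : Ω → ℝ} (hp : ∀ ω, 0 ≤ p ω) {E F : Set Ω}
    (h : E ⊆ F) : Pr p E ≤ Pr p F :=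
  Finset.sum_le_sum fun ω _ => Set.indicator_le_indicator_of_subset h hp ω

lemma Pr_nonneg {Ω : Type*} [Fintype Ω] {p : Ω → ℝ} (hp : ∀ ω, 0 ≤ p ω) (E : Set Ω) :
    0 ≤ Pr p E :=
  Finset.sum_nonneg fun ω _ => Set.indicator_nonneg (fun ω _ => hp ω) ω

lemma Pr_pos_of_mem {Ω : Type*} [Fintype Ω] {p : Ω → ℝ} (hp : ∀ ω, 0 ≤ p ω) {E : Set Ω}
    {ω : Ω} (hω : p ω ≠ 0) (hE : ω ∈ E) : 0 < Pr p E := by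
  refine Finset.sum_pos' (fun ω _ => Set.indicator_nonneg (fun ω _ => hp ω) ω)
    ⟨ω, Finset.mem_univ _, ?_⟩
  rw [Set.indicator_of_mem hE]
  exact lt_of_le_of_ne (hp ω) (Ne.symm hω)

/-- The division in `cPr` is harmless for a nonnegative weight, null conditioning events
included. -/
lemma cPr_mul_Pr {Ω : Type*} [Fintype Ω] {p : Ω → ℝ} (hp : ∀ ω, 0 ≤ p ω) (E F : Set Ω) :
    cPr p E F * Pr p F = Pr p (E ∩ F) := by
  unfold cPr
  by_cases h : Pr p F = 0
  · have : Pr p (E ∩ F) = 0 :=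
      le_antisymm (h ▸ Pr_mono hp Set.inter_subset_right) (Pr_nonneg hp _)
    simp [h, this]
  · field_simp

/-! ### Processes with one-step kernels -/

/-- `ψ` depends only on the coordinates before time `t`. -/
def Adapted {X β : Type*} (t : ℕ) (ψ : (ℕ → X) → β) : Prop :=
  ∀ x x', (∀ s < t, x s = x' s) → ψ x = ψ x'

/-- Weight of a trajectory whose coordinate at time `t` has law `κ t x` given the past of `x`. -/
noncomputable def pathW {X : Type*} [Inhabited X] (κ : ℕ → (ℕ → X) → X → ℝ) (T : ℕ)
    (x : Fin T → X) : ℝ :=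
  ∏ t ∈ Finset.range T, κ t (pad x) (pad x t)

lemma pad_snoc_lt {X : Type*} [Inhabited X] {T : ℕ} (x : Fin T → X) (y : X) {s : ℕ}
    (hs : s < T) : pad (Fin.snoc (α := fun _ => X) x y) s = pad x s := by
  simp [pad, hs, Nat.lt_succ_of_lt hs, Fin.snoc]

lemma pad_snoc_self {X : Type*} [Inhabited X] {T : ℕ} (x : Fin T → X) (y : X) :
    pad (Fin.snoc (α := fun _ => X) x y) T = y := by
  simp [pad, Fin.snoc]

lemma sum_snoc {X : Type*} [Fintype X] {T : ℕ} (F : (Fin (T + 1) → X) → ℝ) :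
    ∑ x, F x = ∑ x : Fin T → X, ∑ y, F (Fin.snoc (α := fun _ => X) x y) := by
  rw [← (Fin.snocEquiv (fun _ : Fin (T + 1) => X)).sum_comp, Fintype.sum_prod_type,
    Finset.sum_comm]
  rfl

lemma pathW_snoc {X : Type*} [Inhabited X] {κ : ℕ → (ℕ → X) → X → ℝ}
    (hκ : ∀ t, Adapted t (κ t)) {T : ℕ} (x : Fin T → X) (y : X) :
    pathW κ (T + 1) (Fin.snoc (α := fun _ => X) x y) = pathW κ T x * κ T (pad x) y := by
  unfold pathW
  rw [Finset.prod_range_succ, pad_snoc_self]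
  congr 1
  · refine Finset.prod_congr rfl fun t ht => ?_
    have ht := Finset.mem_range.1 ht
    rw [pad_snoc_lt x y ht, hκ t _ (pad x) fun s hs => pad_snoc_lt x y (hs.trans ht)]
  · rw [hκ T _ (pad x) fun s hs => pad_snoc_lt x y hs]

/-- Coordinates from time `t` on can be summed out when the integrand ignores them. -/
lemma sum_pathW_reduce {X : Type*} [Fintype X] [Inhabited X] {κ : ℕ → (ℕ → X) → X → ℝ}
    (hκ : ∀ t, Adapted t (κ t)) (hs : ∀ t x, ∑ y, κ t x y = 1) {t T : ℕ} (h : t ≤ T)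
    {ψ : (ℕ → X) → ℝ} (hψ : Adapted t ψ) :
    ∑ x : Fin T → X, pathW κ T x * ψ (pad x) = ∑ x : Fin t → X, pathW κ t x * ψ (pad x) := by
  induction T, h using Nat.le_induction with
  | base => rfl
  | succ n hn ih =>
    rw [sum_snoc, ← ih]
    refine Finset.sum_congr rfl fun x _ => ?_
    have : ∀ y, ψ (pad (Fin.snoc (α := fun _ => X) x y)) = ψ (pad x) := fun y =>
      hψ _ _ fun s hs => pad_snoc_lt x y (hs.trans_le hn)
    simp_rw [this, pathW_snoc hκ, ← Finset.sum_mul, ← Finset.mul_sum, hs, mul_one]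

lemma sum_pathW_one {X : Type*} [Fintype X] [Inhabited X] {κ : ℕ → (ℕ → X) → X → ℝ}
    (hκ : ∀ t, Adapted t (κ t)) (hs : ∀ t x, ∑ y, κ t x y = 1) (T : ℕ) :
    ∑ x : Fin T → X, pathW κ T x = 1 := by
  have := sum_pathW_reduce hκ hs (Nat.zero_le T) (ψ := fun _ => 1) fun _ _ _ => rfl
  simpa [pathW] using this

/-- The coordinate at time `t` may be replaced by an average against its one-step kernel. -/
lemma sum_pathW_step {X : Type*} [Fintype X] [Inhabited X] {κ : ℕ → (ℕ → X) → X → ℝ}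
    (hκ : ∀ t, Adapted t (κ t)) (hs : ∀ t x, ∑ y, κ t x y = 1) {t T : ℕ} (h : t < T)
    {ψ : (ℕ → X) → X → ℝ} (hψ : Adapted t ψ) :
    ∑ x : Fin T → X, pathW κ T x * ψ (pad x) (pad x t) =
      ∑ x : Fin T → X, pathW κ T x * ∑ y, κ t (pad x) y * ψ (pad x) y := by
  rw [sum_pathW_reduce hκ hs (Nat.succ_le_of_lt h) (ψ := fun x => ψ x (x t))
      fun x x' hx => by
        beta_reduce
        rw [hψ x x' fun s hs => hx s (hs.trans (Nat.lt_succ_self t)), hx t (Nat.lt_succ_self t)],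
    sum_pathW_reduce hκ hs h.le (ψ := fun x => ∑ y, κ t x y * ψ x y)
      fun x x' hx => by simp only [hκ t x x' hx, hψ x x' hx], sum_snoc]
  refine Finset.sum_congr rfl fun x _ => ?_
  rw [Finset.mul_sum]
  refine Finset.sum_congr rfl fun y _ => ?_
  rw [pathW_snoc hκ, pad_snoc_self, hψ _ (pad x) fun s hs => pad_snoc_lt x y hs, mul_assoc]

/-- The one-step kernels of a Markov chain with initial law `i` and transition kernels `k`. -/
def chainK {X : Type*} (i : X → ℝ) (k : ℕ → X → X → ℝ) : ℕ → (ℕ → X) → X → ℝ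
  | 0, _, y => i y
  | t + 1, x, y => k t (x t) y

lemma chainK_adapted {X : Type*} (i : X → ℝ) (k : ℕ → X → X → ℝ) (t : ℕ) :
    Adapted t (chainK i k t) := by
  intro x x' h
  cases t with
  | zero => rfl
  | succ t => funext y; simp [chainK, h t (Nat.lt_succ_self t)]

lemma chainW_eq_pathW {A X : Type*} [Inhabited X] (T : ℕ) (init : A → X → ℝ)
    (K : ℕ → A → X → X → ℝ) (a : A) (x : Fin T → X) :
    chainW T init K a x = pathW (chainK (init a) fun t => K t a) T x := by
  unfold chainW pathW
  cases T with
  | zero => simp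
  | succ n =>
    rw [if_neg (Nat.succ_ne_zero n), Finset.prod_range_succ', mul_comm]
    rfl

/-- Independent coordinates, as a process with one-step kernels. -/
lemma noise_eq_pathW {X : Type*} [Inhabited X] (T : ℕ) (q : ℕ → X → ℝ) (n : Fin T → X) :
    ∏ t : Fin T, q t.val (n t) = pathW (fun t _ => q t) T n := by
  unfold pathW
  rw [← Fin.prod_univ_eq_prod_range (fun t => q t (pad n t)) T]
  refine Finset.prod_congr rfl fun t _ => ?_
  simp [pad]

/-! ### Two properties of the joint law -/

section Law

variable {A X1 X2 N1 N2 : Type*} [Fintype A] [Fintype X1] [Fintype X2] [Fintype N1] [Fintype N2]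
  [Inhabited X1] [Inhabited X2] [Inhabited N1] [Inhabited N2]

/-- Given `A` and `X¹_{0:t}`, the next observation `X¹_{t+1}` has law `K t A X¹_t`. -/
def SourceMarkov (T : ℕ) (p : Samp A X1 X2 N1 N2 T → ℝ) (K : ℕ → A → X1 → X1 → ℝ) (t : ℕ) :
    Prop :=
  ∀ ψ : A → (ℕ → X1) → X1 → ℝ, (∀ a, Adapted (t + 1) (ψ a)) →
    ∑ ω, p ω * ψ ω.1 (pad ω.2.1) (pad ω.2.1 (t + 1)) =
      ∑ ω, p ω * ∑ y, K t ω.1 (pad ω.2.1 t) y * ψ ω.1 (pad ω.2.1) y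

/-- The first channel noise is independent of the first source component, and its coordinates are
independent with laws `q`. -/
def NoiseIndep (T : ℕ) (p : Samp A X1 X2 N1 N2 T → ℝ) (q : ℕ → N1 → ℝ) : Prop :=
  ∀ (φ : (ℕ → X1) → ℝ) (ψ : (ℕ → N1) → ℝ),
    ∑ ω, p ω * (φ (pad ω.2.1) * ψ (pad ω.2.2.2.1)) =
      (∑ ω, p ω * φ (pad ω.2.1)) *
        ∑ n : Fin T → N1, pathW (fun t _ => q t) T n * ψ (pad n)

/-- The second source component and the second channel noise can be summed out. -/
lemma sum_jointP (T : ℕ)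
    (pA : A → ℝ) (init1 : A → X1 → ℝ) (K1 : ℕ → A → X1 → X1 → ℝ)
    (init2 : A → X2 → ℝ) (K2 : ℕ → A → X2 → X2 → ℝ)
    (q1 : ℕ → N1 → ℝ) (q2 : ℕ → N2 → ℝ)
    (hinit2 : ∀ a, ∑ x, init2 a x = 1)
    (hK2 : ∀ t a x, ∑ x', K2 t a x x' = 1)
    (hq2 : ∀ t, ∑ n, q2 t n = 1)
    (φ : A → (ℕ → X1) → (ℕ → N1) → ℝ) :
    ∑ ω : Samp A X1 X2 N1 N2 T,
        jointP T pA init1 K1 init2 K2 q1 q2 ω * φ ω.1 (pad ω.2.1) (pad ω.2.2.2.1) =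
      ∑ a, pA a * ∑ x : Fin T → X1, pathW (chainK (init1 a) fun t => K1 t a) T x *
        ∑ n : Fin T → N1, pathW (fun t _ => q1 t) T n * φ a (pad x) (pad n) := by
  have e2 : ∀ a, ∑ x : Fin T → X2, pathW (chainK (init2 a) fun t => K2 t a) T x = 1 := fun a =>
    sum_pathW_one (chainK_adapted _ _)
      (fun t x => by cases t with
        | zero => exact hinit2 a
        | succ t => exact hK2 t a _) T
  have e3 : ∑ n : Fin T → N2, pathW (fun t _ => q2 t) T n = 1 :=
    sum_pathW_one (fun _ _ _ _ => rfl) (fun t _ => hq2 t) T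
  simp only [Fintype.sum_prod_type, jointP, chainW_eq_pathW, noise_eq_pathW]
  refine Finset.sum_congr rfl fun a _ => ?_
  rw [Finset.mul_sum]
  refine Finset.sum_congr rfl fun x _ => ?_
  set c := pA a * pathW (chainK (init1 a) fun t => K1 t a) T x with hc
  calc _ = ∑ x2 : Fin T → X2, pathW (chainK (init2 a) fun t => K2 t a) T x2 *
        ∑ n : Fin T → N1, (c * (pathW (fun t _ => q1 t) T n * φ a (pad x) (pad n))) *
          ∑ n2 : Fin T → N2, pathW (fun t _ => q2 t) T n2 := by
        refine Finset.sum_congr rfl fun x2 _ => ?_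
        rw [Finset.mul_sum]
        refine Finset.sum_congr rfl fun n _ => ?_
        rw [Finset.mul_sum, Finset.mul_sum]
        refine Finset.sum_congr rfl fun n2 _ => ?_
        ring
    _ = _ := by
        rw [← Finset.sum_mul, e2, e3, one_mul, ← mul_assoc, ← hc, Finset.mul_sum]
        simp

lemma jointP_nonneg (T : ℕ)
    (pA : A → ℝ) (init1 : A → X1 → ℝ) (K1 : ℕ → A → X1 → X1 → ℝ)
    (init2 : A → X2 → ℝ) (K2 : ℕ → A → X2 → X2 → ℝ)
    (q1 : ℕ → N1 → ℝ) (q2 : ℕ → N2 → ℝ)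
    (hpA : ∀ a, 0 ≤ pA a)
    (hinit1 : ∀ a x, 0 ≤ init1 a x) (hK1 : ∀ t a x x', 0 ≤ K1 t a x x')
    (hinit2 : ∀ a x, 0 ≤ init2 a x) (hK2 : ∀ t a x x', 0 ≤ K2 t a x x')
    (hq1 : ∀ t n, 0 ≤ q1 t n) (hq2 : ∀ t n, 0 ≤ q2 t n) (ω : Samp A X1 X2 N1 N2 T) :
    0 ≤ jointP T pA init1 K1 init2 K2 q1 q2 ω := by
  have h1 : 0 ≤ chainW T init1 K1 ω.1 ω.2.1 := by
    unfold chainW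
    split_ifs
    · exact zero_le_one
    · exact mul_nonneg (hinit1 _ _) (Finset.prod_nonneg fun t _ => hK1 _ _ _ _)
  have h2 : 0 ≤ chainW T init2 K2 ω.1 ω.2.2.1 := by
    unfold chainW
    split_ifs
    · exact zero_le_one
    · exact mul_nonneg (hinit2 _ _) (Finset.prod_nonneg fun t _ => hK2 _ _ _ _)
  exact mul_nonneg (mul_nonneg (mul_nonneg (mul_nonneg (hpA _) h1) h2)
    (Finset.prod_nonneg fun t _ => hq1 _ _)) (Finset.prod_nonneg fun t _ => hq2 _ _)

lemma sourceMarkov_jointP (T : ℕ)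
    (pA : A → ℝ) (init1 : A → X1 → ℝ) (K1 : ℕ → A → X1 → X1 → ℝ)
    (init2 : A → X2 → ℝ) (K2 : ℕ → A → X2 → X2 → ℝ)
    (q1 : ℕ → N1 → ℝ) (q2 : ℕ → N2 → ℝ)
    (hinit1 : ∀ a, ∑ x, init1 a x = 1) (hK1 : ∀ t a x, ∑ x', K1 t a x x' = 1)
    (hinit2 : ∀ a, ∑ x, init2 a x = 1) (hK2 : ∀ t a x, ∑ x', K2 t a x x' = 1)
    (hq1 : ∀ t, ∑ n, q1 t n = 1) (hq2 : ∀ t, ∑ n, q2 t n = 1) {t : ℕ} (ht : t + 1 < T) :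
    SourceMarkov T (jointP T pA init1 K1 init2 K2 q1 q2 : Samp A X1 X2 N1 N2 T → ℝ) K1 t := by
  intro ψ hψ
  have e3 : ∑ n : Fin T → N1, pathW (fun t _ => q1 t) T n = 1 :=
    sum_pathW_one (fun _ _ _ _ => rfl) (fun t _ => hq1 t) T
  rw [sum_jointP T pA init1 K1 init2 K2 q1 q2 hinit2 hK2 hq2 fun a x _ => ψ a x (x (t + 1)),
    sum_jointP T pA init1 K1 init2 K2 q1 q2 hinit2 hK2 hq2
      fun a x _ => ∑ y, K1 t a (x t) y * ψ a x y]
  refine Finset.sum_congr rfl fun a _ => ?_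
  simp_rw [← Finset.sum_mul, e3, one_mul]
  rw [sum_pathW_step (chainK_adapted _ _)
      (fun t x => by cases t with
        | zero => exact hinit1 a
        | succ t => exact hK1 t a _) ht (hψ a)]
  rfl

lemma noiseIndep_jointP (T : ℕ)
    (pA : A → ℝ) (init1 : A → X1 → ℝ) (K1 : ℕ → A → X1 → X1 → ℝ)
    (init2 : A → X2 → ℝ) (K2 : ℕ → A → X2 → X2 → ℝ)
    (q1 : ℕ → N1 → ℝ) (q2 : ℕ → N2 → ℝ)
    (hinit2 : ∀ a, ∑ x, init2 a x = 1) (hK2 : ∀ t a x, ∑ x', K2 t a x x' = 1)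
    (hq1 : ∀ t, ∑ n, q1 t n = 1) (hq2 : ∀ t, ∑ n, q2 t n = 1) :
    NoiseIndep T (jointP T pA init1 K1 init2 K2 q1 q2 : Samp A X1 X2 N1 N2 T → ℝ) q1 := by
  intro φ ψ
  have e3 : ∑ n : Fin T → N1, pathW (fun t _ => q1 t) T n = 1 :=
    sum_pathW_one (fun _ _ _ _ => rfl) (fun t _ => hq1 t) T
  rw [sum_jointP T pA init1 K1 init2 K2 q1 q2 hinit2 hK2 hq2 fun _ x n => φ x * ψ n,
    sum_jointP T pA init1 K1 init2 K2 q1 q2 hinit2 hK2 hq2 fun _ x _ => φ x, Finset.sum_mul]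
  refine Finset.sum_congr rfl fun a _ => ?_
  simp_rw [← Finset.sum_mul, e3, one_mul]
  rw [mul_assoc, Finset.sum_mul]
  congr 1
  refine Finset.sum_congr rfl fun x _ => ?_
  rw [mul_assoc, Finset.mul_sum (a := φ (pad x))]
  congr 1
  refine Finset.sum_congr rfl fun n _ => ?_
  ring

end Law

/-! ### Causality of the encoder, the memory and the beliefs -/

lemma Zseq_congr {X Z : Type*} (f : Strat X Z) {x x' : ℕ → X} (t : ℕ)
    (h : ∀ s ≤ t, x s = x' s) : Zseq f x t = Zseq f x' t := by
  induction t using Nat.strong_induction_on with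
  | _ t ih =>
    rw [Zseq, Zseq]
    congr 1
    · funext i; exact h _ (Nat.lt_succ_iff.1 i.isLt)
    · funext i; exact ih _ i.isLt fun s hs => h s (hs.trans i.isLt.le)

lemma Mseq_congr {Y M : Type*} [Inhabited M] (l : ℕ → M → Y → M) {y y' : ℕ → Y} (t : ℕ)
    (h : ∀ s < t, y s = y' s) : Mseq l y t = Mseq l y' t := by
  induction t with
  | zero => rfl
  | succ t ih =>
    rw [Mseq, Mseq, h t (Nat.lt_succ_self t), ih fun s hs => h s (hs.trans (Nat.lt_succ_self t))]

section Main

variable {A X1 X2 Z1 N1 N2 Y1 M1 : Type*}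
  [Fintype A] [Fintype X1] [Fintype X2] [Fintype N1] [Fintype N2] [Fintype M1]
  [Inhabited X1] [Inhabited N1] [Inhabited M1]

lemma belA_congr {T : ℕ} (p : Samp A X1 X2 N1 N2 T → ℝ) (t : ℕ) {x x' : ℕ → X1}
    (h : ∀ s ≤ t, x s = x' s) : belA T p t x = belA T p t x' := by
  have : {ω : Samp A X1 X2 N1 N2 T | ∀ s ≤ t, pad ω.2.1 s = x s} =
      {ω | ∀ s ≤ t, pad ω.2.1 s = x' s} := by
    ext ω
    exact forall₂_congr fun s hs => by rw [h s hs]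
  unfold belA
  rw [this]

lemma belM_congr {T : ℕ} (p : Samp A X1 X2 N1 N2 T → ℝ) (h1 : ℕ → Z1 → N1 → Y1)
    (f1 : Strat X1 Z1) (l1 : ℕ → M1 → Y1 → M1) (t : ℕ) {z z' : ℕ → Z1}
    (h : ∀ s < t, z s = z' s) : belM T p h1 f1 l1 t z = belM T p h1 f1 l1 t z' := by
  have : {ω : Samp A X1 X2 N1 N2 T | ∀ s < t, Z1f T f1 ω s = z s} =
      {ω | ∀ s < t, Z1f T f1 ω s = z' s} := by
    ext ω
    exact forall₂_congr fun s hs => by rw [h s hs]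
  unfold belM
  rw [this]

/-- `R¹_t` as a function of the observation path alone. -/
noncomputable def Rpath (T : ℕ) (p : Samp A X1 X2 N1 N2 T → ℝ) (h1 : ℕ → Z1 → N1 → Y1)
    (f1 : Strat X1 Z1) (l1 : ℕ → M1 → Y1 → M1) (x : ℕ → X1) (t : ℕ) :
    X1 × (A → ℝ) × (M1 → ℝ) :=
  (x t, belA T p t x, belM T p h1 f1 l1 t (Zseq f1 x))

lemma Rpath_congr {T : ℕ} (p : Samp A X1 X2 N1 N2 T → ℝ) (h1 : ℕ → Z1 → N1 → Y1)
    (f1 : Strat X1 Z1) (l1 : ℕ → M1 → Y1 → M1) (t : ℕ) {x x' : ℕ → X1}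
    (h : ∀ s ≤ t, x s = x' s) : Rpath T p h1 f1 l1 x t = Rpath T p h1 f1 l1 x' t := by
  unfold Rpath
  rw [h t le_rfl, belA_congr p t h, belM_congr p h1 f1 l1 t fun s hs =>
    Zseq_congr f1 s fun u hu => h u (hu.trans hs.le)]

/-! ### Recursions for the beliefs -/

/-- Bayes update of a belief on `A` after the transition `x → x'`. -/
noncomputable def stepA (K : ℕ → A → X1 → X1 → ℝ) (t : ℕ) (x x' : X1) (b : A → ℝ) : A → ℝ :=
  fun a => K t a x x' * b a / ∑ a', K t a' x x' * b a'

open Classical in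
/-- Law of the updated memory when the old memory has law `μ` and the symbol `z` is sent. -/
noncomputable def stepM (q : ℕ → N1 → ℝ) (h1 : ℕ → Z1 → N1 → Y1) (l1 : ℕ → M1 → Y1 → M1)
    (t : ℕ) (z : Z1) (μ : M1 → ℝ) : M1 → ℝ :=
  fun m' => ∑ m, μ m * ∑ n, q t n * (if l1 t m (h1 t z n) = m' then 1 else 0)

/-- Bayes' rule for one transition of the source. It holds for every next observation: the common
factor `P(X¹_{0:t})` cancels, so only this prefix must have positive probability. -/
lemma belA_succ {T : ℕ} {p : Samp A X1 X2 N1 N2 T → ℝ} (hp : ∀ ω, 0 ≤ p ω)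
    {K : ℕ → A → X1 → X1 → ℝ} {t : ℕ} (hM : SourceMarkov T p K t) (x : ℕ → X1)
    (hx : Pr p {ω | ∀ s ≤ t, pad ω.2.1 s = x s} ≠ 0) :
    belA T p (t + 1) x = stepA K t (x t) (x (t + 1)) (belA T p t x) := by
  classical
  have key : ∀ a, Pr p ({ω : Samp A X1 X2 N1 N2 T | ω.1 = a} ∩
        {ω | ∀ s ≤ t + 1, pad ω.2.1 s = x s}) =
      K t a (x t) (x (t + 1)) * belA T p t x a * Pr p {ω | ∀ s ≤ t, pad ω.2.1 s = x s} := by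
    intro a
    rw [mul_assoc, belA, cPr_mul_Pr hp]
    have e1 : ({ω : Samp A X1 X2 N1 N2 T | ω.1 = a} ∩
        {ω | ∀ s ≤ t + 1, pad ω.2.1 s = x s}) =
        {ω | ω.1 = a ∧ (∀ s < t + 1, pad ω.2.1 s = x s) ∧ pad ω.2.1 (t + 1) = x (t + 1)} := by
      ext ω
      simp only [Set.mem_inter_iff, Set.mem_ofPred_eq]
      refine and_congr_right fun _ => ⟨fun h => ⟨fun s hs => h s hs.le, h _ le_rfl⟩, ?_⟩
      rintro ⟨h, h'⟩ s hs
      rcases hs.lt_or_eq with hs | rfl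
      · exact h s hs
      · exact h'
    have e2 : ({ω : Samp A X1 X2 N1 N2 T | ω.1 = a} ∩ {ω | ∀ s ≤ t, pad ω.2.1 s = x s}) =
        {ω | ω.1 = a ∧ ∀ s < t + 1, pad ω.2.1 s = x s} := by
      ext ω
      simp
    rw [e1, e2, Pr_eq_sum_ite, Pr_eq_sum_ite,
      hM (fun a' x' y => if a' = a ∧ (∀ s < t + 1, x' s = x s) ∧ y = x (t + 1) then 1 else 0)
        fun a' u u' h => by
          funext y
          have : (∀ s < t + 1, u s = x s) ↔ ∀ s < t + 1, u' s = x s :=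
            forall₂_congr fun s hs => by rw [h s hs]
          simp only [this], Finset.mul_sum]
    refine Finset.sum_congr rfl fun ω _ => ?_
    by_cases h : ω.1 = a ∧ ∀ s < t + 1, pad ω.2.1 s = x s
    · obtain ⟨ha, hu⟩ := h
      have hu' : (∀ s < t + 1, pad ω.2.1 s = x s) ↔ True := iff_true_intro hu
      simp only [ha, hu', true_and, hu t (Nat.lt_succ_self t), if_true]
      simp [mul_comm]
    · rw [if_neg h]
      have : ∀ y, ¬ (ω.1 = a ∧ (∀ s < t + 1, pad ω.2.1 s = x s) ∧ y = x (t + 1)) :=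
        fun y hy => h ⟨hy.1, hy.2.1⟩
      simp only [if_neg (this _)]
      simp
  have tot : Pr p {ω : Samp A X1 X2 N1 N2 T | ∀ s ≤ t + 1, pad ω.2.1 s = x s} =
      ∑ a, Pr p ({ω : Samp A X1 X2 N1 N2 T | ω.1 = a} ∩
        {ω | ∀ s ≤ t + 1, pad ω.2.1 s = x s}) := by
    unfold Pr
    rw [Finset.sum_comm]
    refine Finset.sum_congr rfl fun ω _ => ?_
    rw [Finset.sum_eq_single ω.1]
    · simp [Set.indicator]
    · intro a _ ha
      simp [Set.indicator, Ne.symm ha]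
    · simp
  funext a
  unfold stepA
  rw [belA, cPr, tot]
  simp_rw [key]
  rw [← Finset.sum_mul, mul_div_mul_right _ _ hx]

open Classical in
/-- Law of the receiver memory when the transmitted symbols are frozen to `z`. -/
noncomputable def memLaw (T : ℕ) (q : ℕ → N1 → ℝ) (h1 : ℕ → Z1 → N1 → Y1)
    (l1 : ℕ → M1 → Y1 → M1) (t : ℕ) (z : ℕ → Z1) : M1 → ℝ :=
  fun m => ∑ n : Fin T → N1, pathW (fun t _ => q t) T n *
    (if Mseq l1 (fun s => h1 s (z s) (pad n s)) t = m then 1 else 0)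

/-- Because the noise is independent of the source, conditioning on the transmitted symbols only
freezes the input of the channel. -/
lemma belM_eq_memLaw {T : ℕ} {p : Samp A X1 X2 N1 N2 T → ℝ} {q : ℕ → N1 → ℝ}
    (hN : NoiseIndep T p q) (h1 : ℕ → Z1 → N1 → Y1) (f1 : Strat X1 Z1)
    (l1 : ℕ → M1 → Y1 → M1) (t : ℕ) (z : ℕ → Z1)
    (hz : Pr p {ω | ∀ s < t, Z1f T f1 ω s = z s} ≠ 0) :
    belM T p h1 f1 l1 t z = memLaw T q h1 l1 t z := by
  classical
  funext m
  rw [belM, cPr, div_eq_iff hz, mul_comm]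
  have e1 : ({ω : Samp A X1 X2 N1 N2 T | M1f T h1 f1 l1 ω t = m} ∩
      {ω | ∀ s < t, Z1f T f1 ω s = z s}) =
      {ω | (∀ s < t, Zseq f1 (pad ω.2.1) s = z s) ∧
        Mseq l1 (fun s => h1 s (z s) (pad ω.2.2.2.1 s)) t = m} := by
    ext ω
    rw [Set.inter_comm]
    refine and_congr_right fun h => ?_
    have : M1f T h1 f1 l1 ω t = Mseq l1 (fun s => h1 s (z s) (pad ω.2.2.2.1 s)) t :=
      Mseq_congr l1 t fun s hs => by rw [Y1f, h s hs]
    rw [Set.mem_ofPred_eq, this]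
  have := hN (fun x => if ∀ s < t, Zseq f1 x s = z s then 1 else 0)
    (fun n => if Mseq l1 (fun s => h1 s (z s) (n s)) t = m then 1 else 0)
  rw [e1, Pr_eq_sum_ite, Pr_eq_sum_ite]
  refine Eq.trans (Finset.sum_congr rfl fun ω _ => ?_) this
  rw [ite_and]
  split_ifs <;> simp

lemma memLaw_succ {T : ℕ} {q : ℕ → N1 → ℝ} (hq : ∀ t, ∑ n, q t n = 1)
    (h1 : ℕ → Z1 → N1 → Y1) (l1 : ℕ → M1 → Y1 → M1) {t : ℕ} (ht : t < T) (z : ℕ → Z1) :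
    memLaw T q h1 l1 (t + 1) z = stepM q h1 l1 t (z t) (memLaw T q h1 l1 t z) := by
  classical
  funext m'
  have := sum_pathW_step (κ := fun t _ => q t) (fun _ _ _ _ => rfl) (fun t _ => hq t) ht
    (ψ := fun n y => if l1 t (Mseq l1 (fun s => h1 s (z s) (n s)) t) (h1 t (z t) y) = m'
      then (1 : ℝ) else 0)
    fun n n' h => by
      funext y
      have : Mseq l1 (fun s => h1 s (z s) (n s)) t = Mseq l1 (fun s => h1 s (z s) (n' s)) t :=
        Mseq_congr l1 t fun s hs => by rw [h s hs]
      simp only [this]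
  refine Eq.trans (by rfl) (this.trans ?_)
  unfold stepM memLaw
  simp_rw [Finset.sum_mul]
  rw [Finset.sum_comm]
  refine Finset.sum_congr rfl fun n _ => ?_
  rw [Finset.sum_eq_single (Mseq l1 (fun s => h1 s (z s) (pad n s)) t)]
  · simp
  · intro m _ hm
    simp [Ne.symm hm]
  · simp

lemma belM_succ {T : ℕ} {p : Samp A X1 X2 N1 N2 T → ℝ} (hp : ∀ ω, 0 ≤ p ω) {q : ℕ → N1 → ℝ}
    (hN : NoiseIndep T p q) (hq : ∀ t, ∑ n, q t n = 1) (h1 : ℕ → Z1 → N1 → Y1)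
    (f1 : Strat X1 Z1) (l1 : ℕ → M1 → Y1 → M1) {t : ℕ} (ht : t < T) (z : ℕ → Z1)
    (hz : 0 < Pr p {ω | ∀ s < t + 1, Z1f T f1 ω s = z s}) :
    belM T p h1 f1 l1 (t + 1) z = stepM q h1 l1 t (z t) (belM T p h1 f1 l1 t z) := by
  have hz' : 0 < Pr p {ω | ∀ s < t, Z1f T f1 ω s = z s} :=
    hz.trans_le (Pr_mono hp fun ω h s hs => h s (hs.trans (Nat.lt_succ_self t)))
  rw [belM_eq_memLaw hN h1 f1 l1 _ z hz.ne', belM_eq_memLaw hN h1 f1 l1 _ z hz'.ne',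
    memLaw_succ hq h1 l1 ht]

/-- The next value of `R¹` when the current value is `ρ`, the symbol `z` is sent and `x'` is
observed next. -/
noncomputable def stepR (K : ℕ → A → X1 → X1 → ℝ) (q : ℕ → N1 → ℝ) (h1 : ℕ → Z1 → N1 → Y1)
    (l1 : ℕ → M1 → Y1 → M1) (t : ℕ) (ρ : X1 × (A → ℝ) × (M1 → ℝ)) (z : Z1) (x' : X1) :
    X1 × (A → ℝ) × (M1 → ℝ) :=
  (x', stepA K t ρ.1 x' ρ.2.1, stepM q h1 l1 t z ρ.2.2)

lemma R1f_succ {T : ℕ} {p : Samp A X1 X2 N1 N2 T → ℝ} (hp : ∀ ω, 0 ≤ p ω)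
    {K : ℕ → A → X1 → X1 → ℝ} {q : ℕ → N1 → ℝ} {t : ℕ} (hM : SourceMarkov T p K t)
    (hN : NoiseIndep T p q) (hq : ∀ t, ∑ n, q t n = 1) (h1 : ℕ → Z1 → N1 → Y1)
    (f1 : Strat X1 Z1) (l1 : ℕ → M1 → Y1 → M1) (ht : t < T) {ω : Samp A X1 X2 N1 N2 T}
    (hω : p ω ≠ 0) :
    R1f T p h1 f1 l1 ω (t + 1) =
      stepR K q h1 l1 t (R1f T p h1 f1 l1 ω t) (Z1f T f1 ω t) (pad ω.2.1 (t + 1)) := by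
  unfold R1f stepR
  rw [belA_succ hp hM (pad ω.2.1) (Pr_pos_of_mem hp hω (by intro s _; rfl)).ne',
    belM_succ hp hN hq h1 f1 l1 ht (Z1f T f1 ω) (Pr_pos_of_mem hp hω (by intro s _; rfl))]

/-! ### The one-step transition law -/

/-- Tower property: a function of `A` may be replaced by its average under the belief `b¹_t`
against any weight determined by `X¹_{0:t}`. -/
lemma sum_tower {T : ℕ} {p : Samp A X1 X2 N1 N2 T → ℝ} (hp : ∀ ω, 0 ≤ p ω) (t : ℕ)
    {φ : (ℕ → X1) → ℝ} (hφ : Adapted (t + 1) φ) (h : A → ℝ) :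
    ∑ ω, p ω * (φ (pad ω.2.1) * h ω.1) =
      ∑ ω, p ω * (φ (pad ω.2.1) * ∑ a, belA T p t (pad ω.2.1) a * h a) := by
  classical
  -- Both sides are compared on each fibre of the map sending `ω` to its prefix `X¹_{0:t}`.
  let pre : Samp A X1 X2 N1 N2 T → (Fin (t + 1) → X1) := fun ω i => pad ω.2.1 i
  rw [← Finset.sum_fiberwise Finset.univ pre, ← Finset.sum_fiberwise Finset.univ pre
    fun ω => p ω * (φ (pad ω.2.1) * ∑ a, belA T p t (pad ω.2.1) a * h a)]
  refine Finset.sum_congr rfl fun u _ => ?_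
  set x : ℕ → X1 := pad u with hx
  have hmem : ∀ ω, pre ω = u ↔ ∀ s ≤ t, pad ω.2.1 s = x s := by
    intro ω
    constructor
    · rintro rfl s hs
      simp [hx, pad, pre, Nat.lt_succ_iff.2 hs]
    · intro hs
      funext i
      have := hs i (Nat.lt_succ_iff.1 i.isLt)
      exact this.trans (by rw [hx, pad, dif_pos i.isLt])
  have hb : ∀ a, belA T p t x a * (∑ ω with pre ω = u, p ω) =
      ∑ ω with pre ω = u, p ω * (if ω.1 = a then 1 else 0) := by
    intro a
    have e : Pr p {ω | ∀ s ≤ t, pad ω.2.1 s = x s} = ∑ ω with pre ω = u, p ω := by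
      rw [Pr_eq_sum_ite, Finset.sum_filter]
      refine Finset.sum_congr rfl fun ω _ => ?_
      simp [hmem]
    rw [← e, belA, cPr_mul_Pr hp]
    have e' : ({ω : Samp A X1 X2 N1 N2 T | ω.1 = a} ∩ {ω | ∀ s ≤ t, pad ω.2.1 s = x s}) =
        {ω | (pre ω = u) ∧ ω.1 = a} := by
      ext ω
      rw [Set.mem_ofPred_eq, hmem, Set.inter_comm]
      rfl
    rw [e', Pr_eq_sum_ite, Finset.sum_filter]
    refine Finset.sum_congr rfl fun ω _ => ?_
    by_cases h1 : pre ω = u <;> simp [h1]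
  calc _ = φ x * ∑ a, (∑ ω with pre ω = u, p ω * (if ω.1 = a then 1 else 0)) * h a := by
        simp_rw [Finset.sum_mul]
        rw [Finset.sum_comm (s := Finset.univ (α := A)), Finset.mul_sum]
        refine Finset.sum_congr rfl fun ω hω => ?_
        have hω := (hmem ω).1 (Finset.mem_filter.1 hω).2
        rw [hφ (pad ω.2.1) x fun s hs => hω s (Nat.lt_succ_iff.1 hs),
          Finset.sum_eq_single ω.1]
        · simp; ring
        · intro a _ ha
          simp [Ne.symm ha]
        · simp
    _ = _ := by
        trans (∑ ω with pre ω = u, p ω) * (φ x * ∑ a, belA T p t x a * h a)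
        · simp_rw [← hb]
          rw [mul_left_comm]
          congr 1
          rw [Finset.mul_sum]
          refine Finset.sum_congr rfl fun a _ => ?_
          ring
        · rw [Finset.sum_mul]
          refine Finset.sum_congr rfl fun ω hω => ?_
          have hω := (hmem ω).1 (Finset.mem_filter.1 hω).2
          rw [hφ (pad ω.2.1) x fun s hs => hω s (Nat.lt_succ_iff.1 hs), belA_congr p t hω]

open Classical in
/-- On an event determined by `X¹_{0:t}` that fixes `R¹_t` and `Z¹_t`, the transition probability
of `R¹` depends on those two values only. -/
lemma Pr_next_inter {T : ℕ} {p : Samp A X1 X2 N1 N2 T → ℝ} (hp : ∀ ω, 0 ≤ p ω)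
    {K : ℕ → A → X1 → X1 → ℝ} {q : ℕ → N1 → ℝ} {t : ℕ} (hM : SourceMarkov T p K t)
    (hN : NoiseIndep T p q) (hq : ∀ t, ∑ n, q t n = 1) (h1 : ℕ → Z1 → N1 → Y1)
    (f1 : Strat X1 Z1) (l1 : ℕ → M1 → Y1 → M1) (ht : t < T)
    (ρ r : X1 × (A → ℝ) × (M1 → ℝ)) (z : Z1) (C : (ℕ → X1) → Prop) (hC : Adapted (t + 1) C)
    (hCρ : ∀ x, C x → Rpath T p h1 f1 l1 x t = ρ ∧ Zseq f1 x t = z) :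
    Pr p ({ω | R1f T p h1 f1 l1 ω (t + 1) = r} ∩ {ω | C (pad ω.2.1)}) =
      (∑ y, (if stepR K q h1 l1 t ρ z y = r then 1 else 0) * ∑ a, ρ.2.1 a * K t a ρ.1 y) *
        Pr p {ω | C (pad ω.2.1)} := by
  have e1 : Pr p ({ω | R1f T p h1 f1 l1 ω (t + 1) = r} ∩ {ω | C (pad ω.2.1)}) =
      ∑ ω, p ω * ((if C (pad ω.2.1) then 1 else 0) *
        (if stepR K q h1 l1 t ρ z (pad ω.2.1 (t + 1)) = r then 1 else 0)) := by
    rw [← Set.ofPred_and, Pr_eq_sum_ite]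
    refine Finset.sum_congr rfl fun ω _ => ?_
    by_cases hω : p ω = 0
    · simp [hω]
    by_cases hc : C (pad ω.2.1)
    · obtain ⟨hr, hz⟩ := hCρ _ hc
      rw [R1f_succ hp hM hN hq h1 f1 l1 ht hω]
      have hr' : R1f T p h1 f1 l1 ω t = ρ := hr
      have hz' : Z1f T f1 ω t = z := hz
      simp [hr', hz', hc]
    · simp [hc]
  rw [e1, hM (fun _ x y => (if C x then 1 else 0) *
      (if stepR K q h1 l1 t ρ z y = r then 1 else 0))
    fun _ x x' h => by simp only [hC x x' h]]
  calc _ = ∑ y, (if stepR K q h1 l1 t ρ z y = r then 1 else 0) *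
        ∑ ω, p ω * ((if C (pad ω.2.1) then 1 else 0) * K t ω.1 ρ.1 y) := by
        simp_rw [Finset.mul_sum]
        rw [Finset.sum_comm]
        refine Finset.sum_congr rfl fun y _ => Finset.sum_congr rfl fun ω _ => ?_
        by_cases hc : C (pad ω.2.1)
        · have hx : pad ω.2.1 t = ρ.1 := congrArg Prod.fst (hCρ _ hc).1
          rw [hx]; ring
        · simp [hc]
    _ = _ := by
        rw [Finset.sum_mul]
        refine Finset.sum_congr rfl fun y _ => ?_
        rw [sum_tower hp t (φ := fun x => if C x then 1 else 0)
          (fun x x' h => by simp only [hC x x' h]) fun a => K t a ρ.1 y, mul_assoc, Pr_eq_sum_ite]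
        congr 1
        rw [Finset.mul_sum]
        refine Finset.sum_congr rfl fun ω _ => ?_
        by_cases hc : C (pad ω.2.1)
        · have hb : belA T p t (pad ω.2.1) = ρ.2.1 :=
            congrArg (fun r => r.2.1) (hCρ _ hc).1
          rw [hb]; ring
        · simp [hc]

end Main

/-- **Lemma 3 of the paper.** `R¹_t = (X¹_t, b¹_t, μ¹_t)` is a perfectly observed
controlled Markov process for encoder 1 with control action `Z¹_t`: conditioned on any
positive-probability realization of `(R¹_{0:t}, Z¹_{0:t})`, the distribution of
`R¹_{t+1}` depends only on `(R¹_t, Z¹_t)`. -/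
theorem R_is_controlled_Markov
    {A X1 X2 Z1 Z2 N1 N2 Y1 Y2 M1 M2 : Type*}
    [Fintype A] [Fintype X1] [Fintype X2] [Fintype Z1] [Fintype Z2]
    [Fintype N1] [Fintype N2] [Fintype Y1] [Fintype Y2] [Fintype M1] [Fintype M2]
    [Inhabited X1] [Inhabited X2] [Inhabited N1] [Inhabited N2]
    [Inhabited M1] [Inhabited M2]
    (T : ℕ)
    (pA : A → ℝ) (init1 : A → X1 → ℝ) (K1 : ℕ → A → X1 → X1 → ℝ)
    (init2 : A → X2 → ℝ) (K2 : ℕ → A → X2 → X2 → ℝ)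
    (q1 : ℕ → N1 → ℝ) (q2 : ℕ → N2 → ℝ)
    (h1 : ℕ → Z1 → N1 → Y1) (h2 : ℕ → Z2 → N2 → Y2)
    (hpA : (∀ a, 0 ≤ pA a) ∧ ∑ a, pA a = 1)
    (hinit1 : ∀ a, (∀ x, 0 ≤ init1 a x) ∧ ∑ x, init1 a x = 1)
    (hK1 : ∀ t a x, (∀ x', 0 ≤ K1 t a x x') ∧ ∑ x', K1 t a x x' = 1)
    (hinit2 : ∀ a, (∀ x, 0 ≤ init2 a x) ∧ ∑ x, init2 a x = 1)
    (hK2 : ∀ t a x, (∀ x', 0 ≤ K2 t a x x') ∧ ∑ x', K2 t a x x' = 1)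
    (hq1 : ∀ t, (∀ n, 0 ≤ q1 t n) ∧ ∑ n, q1 t n = 1)
    (hq2 : ∀ t, (∀ n, 0 ≤ q2 t n) ∧ ∑ n, q2 t n = 1)
    -- arbitrary fixed strategies of the two encoders and of the receiver
    (f1 : Strat X1 Z1) (f2 : Strat X2 Z2)
    (g : ℕ → Y1 → Y2 → M1 → M2 → X1 × X2 × A)
    (l1 : ℕ → M1 → Y1 → M1) (l2 : ℕ → M2 → Y2 → M2) :
    ∀ t, t + 1 < T →
      ∀ (rs : ℕ → X1 × (A → ℝ) × (M1 → ℝ)) (zs : ℕ → Z1)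
        (r : X1 × (A → ℝ) × (M1 → ℝ)),
        0 < Pr (jointP T pA init1 K1 init2 K2 q1 q2)
            {ω : Samp A X1 X2 N1 N2 T |
              ∀ s ≤ t, R1f T (jointP T pA init1 K1 init2 K2 q1 q2) h1 f1 l1 ω s = rs s ∧
                Z1f T f1 ω s = zs s} →
        cPr (jointP T pA init1 K1 init2 K2 q1 q2)
            {ω : Samp A X1 X2 N1 N2 T |
              R1f T (jointP T pA init1 K1 init2 K2 q1 q2) h1 f1 l1 ω (t + 1) = r}
            {ω | ∀ s ≤ t,
              R1f T (jointP T pA init1 K1 init2 K2 q1 q2) h1 f1 l1 ω s = rs s ∧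
                Z1f T f1 ω s = zs s} =
          cPr (jointP T pA init1 K1 init2 K2 q1 q2)
            {ω : Samp A X1 X2 N1 N2 T |
              R1f T (jointP T pA init1 K1 init2 K2 q1 q2) h1 f1 l1 ω (t + 1) = r}
            {ω | R1f T (jointP T pA init1 K1 init2 K2 q1 q2) h1 f1 l1 ω t = rs t ∧
              Z1f T f1 ω t = zs t} := by
  have hp := jointP_nonneg (N1 := N1) (N2 := N2) T pA init1 K1 init2 K2 q1 q2 hpA.1
    (fun a => (hinit1 a).1) (fun t a x => (hK1 t a x).1) (fun a => (hinit2 a).1)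
    (fun t a x => (hK2 t a x).1) (fun t => (hq1 t).1) (fun t => (hq2 t).1)
  have hN := noiseIndep_jointP T pA init1 K1 init2 K2 q1 q2
    (fun a => (hinit2 a).2) (fun t a x => (hK2 t a x).2) (fun t => (hq1 t).2) (fun t => (hq2 t).2)
  intro t ht rs zs r hpos
  have hM := sourceMarkov_jointP T pA init1 K1 init2 K2 q1 q2
    (fun a => (hinit1 a).2) (fun t a x => (hK1 t a x).2) (fun a => (hinit2 a).2)
    (fun t a x => (hK2 t a x).2) (fun t => (hq1 t).2) (fun t => (hq2 t).2) ht
  set p : Samp A X1 X2 N1 N2 T → ℝ := jointP T pA init1 K1 init2 K2 q1 q2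
  have hRZ : ∀ (x x' : ℕ → X1), (∀ s < t + 1, x s = x' s) → ∀ s ≤ t,
      (Rpath T p h1 f1 l1 x s = rs s ∧ Zseq f1 x s = zs s) =
        (Rpath T p h1 f1 l1 x' s = rs s ∧ Zseq f1 x' s = zs s) := fun x x' h s hs => by
    have h' : ∀ u ≤ s, x u = x' u := fun u hu => h u (Nat.lt_succ_iff.2 (hu.trans hs))
    rw [Rpath_congr p h1 f1 l1 s h', Zseq_congr f1 s h']
  have hpos' := hpos.trans_le (Pr_mono hp (F := {ω | R1f T p h1 f1 l1 ω t = rs t ∧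
    Z1f T f1 ω t = zs t}) fun ω h => h t le_rfl)
  have k1 := Pr_next_inter hp hM hN (fun t => (hq1 t).2) h1 f1 l1 (Nat.lt_of_succ_lt ht)
    (rs t) r (zs t) (fun x => ∀ s ≤ t, Rpath T p h1 f1 l1 x s = rs s ∧ Zseq f1 x s = zs s)
    (fun x x' h => propext (forall₂_congr fun s hs => iff_of_eq (hRZ x x' h s hs)))
    (fun x h => h t le_rfl)
  have k2 := Pr_next_inter hp hM hN (fun t => (hq1 t).2) h1 f1 l1 (Nat.lt_of_succ_lt ht)
    (rs t) r (zs t) (fun x => Rpath T p h1 f1 l1 x t = rs t ∧ Zseq f1 x t = zs t)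
    (fun x x' h => hRZ x x' h t le_rfl) (fun x h => h)
  exact ((div_eq_iff hpos.ne').2 k1).trans ((div_eq_iff hpos'.ne').2 k2).symm

end MTC
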